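/- arXiv:2111.05918 — 4 statements merged into one kernel-verified Lean document; each statement's English description precedes it below -/
import Mathlib

section
/- Let A be a Grothendieck abelian category with enough projective objects and let (I_λ)_{λ∈Λ} be a family of small categories indexed by a type Λ. Then the derived category of the functor category from the disjoint union (coproduct) of the categories I_λ to A is equivalent to the product of the derived categories of the individual functor categories: D(A^{∐_{λ∈Λ} I_λ}) ≃ ∏_{λ∈Λ} D(A^{I_λ}). -/
/-! The comparison functor `D(A^{∐ I l}) ⥤ ∏ D(A^{I l})` is induced by the exact restriction functors
`A^{∐ I l} ⥤ A^{I l}`, which together identify `A^{∐ I l}` with `∏ A^{I l}`. The argument works for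
any family of exact functors `p j : C ⥤ D j` identifying `C` with `∏ D j`: then families of
complexes, of morphisms of complexes and of homotopies lift uniquely (up to isomorphism for
complexes) from the `D j` to `C`, and a morphism of complexes in `C` is a quasi-isomorphism as soon
as all its images are (`exists_complex`, `exists_complex_hom`, `nonempty_homotopy`,
`quasiIso_of_forall`).

A localization does not commute with infinite products in general. Here it does because the
homotopy category admits a calculus of fractions: a morphism in the derived category is a single
left fraction, and it vanishes exactly when its numerator becomes null-homotopic after composition
with a single quasi-isomorphism. Such data, chosen separately for each `j`, lift to `C`, which
gives fullness (`exists_Q_hom`) and faithfulness (`Q_hom_eq_zero`); essential surjectivity follows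
from `exists_complex`.
-/

open CategoryTheory Limits

universe w v u

namespace DerivedCategoryPi

open DerivedCategory

/-- A morphism of complexes which vanishes in the derived category becomes null-homotopic after
composition with some quasi-isomorphism: this is the calculus of left fractions in the homotopy
category. -/
lemma exists_homotopy_of_Q_map_eq_zero {C : Type*} [Category* C] [Abelian C]
    [HasDerivedCategory C] {K L : CochainComplex C ℤ} (a : K ⟶ L) (ha : Q.map a = 0) :
    ∃ (M : CochainComplex C ℤ) (t : L ⟶ M), QuasiIso t ∧ Nonempty (Homotopy (a ≫ t) 0) := by
  have h0 : Qh.map ((HomotopyCategory.quotient C (ComplexShape.up ℤ)).map a) =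
      Qh.map ((HomotopyCategory.quotient C (ComplexShape.up ℤ)).map 0) := by
    rw [← cancel_mono ((quotientCompQhIso C).hom.app L), quotientCompQhIso_hom_naturality,
      quotientCompQhIso_hom_naturality, ha, Q.map_zero]
  rw [MorphismProperty.map_eq_iff_postcomp Qh
    (HomotopyCategory.quasiIso C (ComplexShape.up ℤ))] at h0
  obtain ⟨M, t, ht, h⟩ := h0
  obtain ⟨M, rfl⟩ := HomotopyCategory.quotient_obj_surjective M
  obtain ⟨t, rfl⟩ := (HomotopyCategory.quotient _ _).map_surjective t
  rw [HomotopyCategory.quotient_map_mem_quasiIso_iff] at ht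
  refine ⟨M, t, ht, ⟨HomotopyCategory.homotopyOfEq _ _ ?_⟩⟩
  rw [Functor.map_comp, h, ← Functor.map_comp, zero_comp]

section

variable {J : Type*} {C : Type*} [Category* C] {D : J → Type*} [∀ j, Category* (D j)]
  (p : ∀ j, C ⥤ D j)

section Objects

variable [(Functor.pi' p).IsEquivalence]

include p in
lemma hom_ext {X Y : C} {f g : X ⟶ Y} (h : ∀ j, (p j).map f = (p j).map g) : f = g :=
  (Functor.pi' p).map_injective (funext h)

lemma exists_hom {X Y : C} (f : ∀ j, (p j).obj X ⟶ (p j).obj Y) :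
    ∃ g : X ⟶ Y, ∀ j, (p j).map g = f j := by
  obtain ⟨g, hg⟩ := (Functor.pi' p).map_surjective (X := X) (Y := Y) f
  exact ⟨g, fun j => congr_fun hg j⟩

lemma exists_obj (X : ∀ j, D j) : ∃ Y : C, Nonempty (∀ j, (p j).obj Y ≅ X j) :=
  ⟨(Functor.pi' p).objPreimage X,
    ⟨fun j => (Pi.eval D j).mapIso ((Functor.pi' p).objObjPreimageIso X)⟩⟩

lemma isIso_of_forall {X Y : C} (f : X ⟶ Y) (h : ∀ j, IsIso ((p j).map f)) : IsIso f := by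
  have : IsIso ((Functor.pi' p).map f) := (isIso_pi_iff _).2 h
  exact isIso_of_reflects_iso f (Functor.pi' p)

end Objects

variable [Abelian C] [∀ j, Abelian (D j)] [∀ j, (p j).Additive]

/-- The functor on cochain complexes induced by the `j`-th projection. -/
abbrev mapCC (j : J) : CochainComplex C ℤ ⥤ CochainComplex (D j) ℤ :=
  (p j).mapHomologicalComplex (ComplexShape.up ℤ)

section Complexes

variable [(Functor.pi' p).IsEquivalence]

lemma exists_complex_hom {K L : CochainComplex C ℤ}
    (f : ∀ j, (mapCC p j).obj K ⟶ (mapCC p j).obj L) :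
    ∃ g : K ⟶ L, ∀ j, (mapCC p j).map g = f j := by
  choose g hg using fun n => exists_hom p (fun j => (f j).f n)
  refine ⟨{ f := g, comm' := fun m n _ => hom_ext p fun j => ?_ }, fun j => ?_⟩
  · rw [Functor.map_comp, Functor.map_comp, hg, hg]
    exact (f j).comm m n
  · ext n
    exact hg n j

lemma exists_complex (K : ∀ j, CochainComplex (D j) ℤ) :
    ∃ L : CochainComplex C ℤ, Nonempty (∀ j, (mapCC p j).obj L ≅ K j) := by
  choose X e using fun n => exists_obj p (fun j => (K j).X n)
  replace e := fun n => (e n).some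
  choose d hd using fun m n => exists_hom p
    (fun j => (e m j).hom ≫ (K j).d m n ≫ (e n j).inv)
  refine ⟨{ X := X, d := d, shape := fun m n h => ?_, d_comp_d' := fun l m n _ _ => ?_ },
    ⟨fun j => HomologicalComplex.Hom.isoOfComponents (fun n => e n j) fun m n _ => ?_⟩⟩
  · exact hom_ext p fun j => by simp [hd, (K j).shape m n h]
  · exact hom_ext p fun j => by simp [hd]
  · change (e m j).hom ≫ (K j).d m n = (p j).map (d m n) ≫ (e n j).hom
    simp [hd]

lemma nonempty_homotopy {K L : CochainComplex C ℤ} (f : K ⟶ L)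
    (h : ∀ j, Nonempty (Homotopy ((mapCC p j).map f) 0)) : Nonempty (Homotopy f 0) := by
  replace h := fun j => (h j).some
  choose g hg using fun m n => exists_hom p (fun j => (h j).hom m n)
  refine ⟨{ hom := g, zero := fun m n hmn => hom_ext p fun j => ?_,
            comm := fun n => hom_ext p fun j => ?_ }⟩
  · rw [hg, (h j).zero m n hmn, Functor.map_zero]
    rfl
  · have := (h j).comm n
    rw [dNext_eq _ (show (ComplexShape.up ℤ).Rel n (n + 1) from rfl),
      prevD_eq _ (show (ComplexShape.up ℤ).Rel (n - 1) n by simp)] at this ⊢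
    simp only [Functor.map_add, Functor.map_comp, hg, HomologicalComplex.zero_f,
      Functor.map_zero]
    exact this

variable [∀ j, PreservesFiniteLimits (p j)] [∀ j, PreservesFiniteColimits (p j)]

lemma quasiIso_of_forall {K L : CochainComplex C ℤ} (f : K ⟶ L)
    (h : ∀ j, QuasiIso ((mapCC p j).map f)) : QuasiIso f := by
  rw [quasiIso_iff]
  intro n
  rw [quasiIsoAt_iff, ShortComplex.quasiIso_iff]
  refine isIso_of_forall p _ fun j => ?_
  have hj : ShortComplex.QuasiIso ((p j).mapShortComplex.map
      ((HomologicalComplex.shortComplexFunctor C _ n).map f)) :=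
    (quasiIsoAt_iff _ _).1 ((h j).quasiIsoAt n)
  rw [ShortComplex.quasiIso_iff] at hj
  have nat := ShortComplex.mapHomologyIso_hom_naturality
    ((HomologicalComplex.shortComplexFunctor C _ n).map f) (p j)
  exact (MorphismProperty.isomorphisms (D j)).arrow_mk_iso_iff
    (Arrow.isoMk (ShortComplex.mapHomologyIso _ (p j)) (ShortComplex.mapHomologyIso _ (p j))
      nat.symm) |>.1 hj

end Complexes

variable [∀ j, PreservesFiniteLimits (p j)] [∀ j, PreservesFiniteColimits (p j)]
  [HasDerivedCategory C] [∀ j, HasDerivedCategory (D j)]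

/-- The functor `D(C) ⥤ ∏ D(D j)` whose components are induced by the exact functors `p j`. -/
noncomputable def comparison : DerivedCategory C ⥤ ∀ j, DerivedCategory (D j) :=
  Functor.pi' fun j => (p j).mapDerivedCategory

variable [(Functor.pi' p).IsEquivalence]

instance : (comparison p).EssSurj where
  mem_essImage Y := by
    obtain ⟨L, ⟨e⟩⟩ := exists_complex p fun j => Q.objPreimage (Y j)
    exact ⟨Q.obj L, ⟨Pi.isoMk fun j => (p j).mapDerivedCategoryFactors.app L ≪≫
      Q.mapIso (e j) ≪≫ Q.objObjPreimageIso (Y j)⟩⟩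

/-- Fullness of `comparison p` on the objects coming from complexes: the left fractions which
represent the components `f j` lift to a single left fraction in `C`. -/
lemma exists_Q_hom {K L : CochainComplex C ℤ}
    (f : ∀ j, Q.obj ((mapCC p j).obj K) ⟶ Q.obj ((mapCC p j).obj L)) :
    ∃ g : Q.obj K ⟶ Q.obj L, ∀ j, (p j).mapDerivedCategory.map g =
      (p j).mapDerivedCategoryFactors.hom.app K ≫ f j ≫
        (p j).mapDerivedCategoryFactors.inv.app L := by
  choose M a s hs hf using fun j => left_fac (f j)
  obtain ⟨N, ⟨e⟩⟩ := exists_complex p M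
  obtain ⟨a', ha'⟩ := exists_complex_hom p fun j => a j ≫ (e j).inv
  obtain ⟨s', hs'⟩ := exists_complex_hom p fun j => s j ≫ (e j).inv
  have : QuasiIso s' := quasiIso_of_forall p s' fun j => by
    have := (isIso_Q_map_iff_quasiIso _ _).1 (hs j)
    rw [hs']
    infer_instance
  refine ⟨Q.map a' ≫ inv (Q.map s'), fun j => ?_⟩
  rw [Functor.map_comp, Functor.map_inv, IsIso.comp_inv_eq,
    ← cancel_mono ((p j).mapDerivedCategoryFactors.hom.app N)]
  simp [Functor.mapDerivedCategoryFactors_hom_naturality, ha', hs', hf]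

/-- Faithfulness of `comparison p` on the objects coming from complexes: if all the images of a
left fraction vanish, the quasi-isomorphisms and homotopies witnessing it lift to `C`. -/
lemma Q_hom_eq_zero {K L : CochainComplex C ℤ} (f : Q.obj K ⟶ Q.obj L)
    (hf : ∀ j, (p j).mapDerivedCategory.map f = 0) : f = 0 := by
  obtain ⟨L', a, s, _, rfl⟩ := left_fac f
  have ha (j : J) : Q.map ((mapCC p j).map a) = 0 := by
    have h1 : (p j).mapDerivedCategory.map (Q.map a) = 0 := by
      simpa using hf j
    rw [← cancel_epi ((p j).mapDerivedCategoryFactors.hom.app K),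
      ← Functor.mapDerivedCategoryFactors_hom_naturality, h1, zero_comp, comp_zero]
  choose M t ht h using fun j => exists_homotopy_of_Q_map_eq_zero _ (ha j)
  obtain ⟨N, ⟨e⟩⟩ := exists_complex p M
  obtain ⟨t', ht'⟩ := exists_complex_hom p fun j => t j ≫ (e j).inv
  have : QuasiIso t' := quasiIso_of_forall p t' fun j => by
    have := ht j
    rw [ht']
    infer_instance
  obtain ⟨H⟩ := nonempty_homotopy p (a ≫ t') fun j =>
    ⟨(Homotopy.ofEq (by simp [ht'])).trans
      (((h j).some.compRight (e j).inv).trans (Homotopy.ofEq zero_comp))⟩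
  have : Q.map a = 0 := by
    rw [← cancel_mono (Q.map t'), ← Functor.map_comp, Q_map_eq_of_homotopy _ H, Q.map_zero,
      zero_comp]
  rw [this, zero_comp]

instance : (comparison p).Full where
  map_surjective {X Y} f := by
    obtain ⟨K, ⟨eX⟩⟩ : ∃ K, Nonempty (Q.obj K ≅ X) := ⟨_, ⟨Q.objObjPreimageIso X⟩⟩
    obtain ⟨L, ⟨eY⟩⟩ : ∃ L, Nonempty (Q.obj L ≅ Y) := ⟨_, ⟨Q.objObjPreimageIso Y⟩⟩
    obtain ⟨g, hg⟩ := exists_Q_hom p (K := K) (L := L) fun j =>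
      (p j).mapDerivedCategoryFactors.inv.app K ≫ (p j).mapDerivedCategory.map eX.hom ≫ f j ≫
        (p j).mapDerivedCategory.map eY.inv ≫ (p j).mapDerivedCategoryFactors.hom.app L
    have key (j : J) (φ : (p j).mapDerivedCategory.obj X ⟶ (p j).mapDerivedCategory.obj Y) :
        (p j).mapDerivedCategory.map eX.inv ≫ ((p j).mapDerivedCategoryFactors.hom.app K ≫
          ((p j).mapDerivedCategoryFactors.inv.app K ≫ (p j).mapDerivedCategory.map eX.hom ≫ φ ≫
            (p j).mapDerivedCategory.map eY.inv ≫ (p j).mapDerivedCategoryFactors.hom.app L) ≫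
          (p j).mapDerivedCategoryFactors.inv.app L) ≫ (p j).mapDerivedCategory.map eY.hom = φ := by
      simp [← Functor.map_comp, ← Functor.map_comp_assoc]
    refine ⟨eX.inv ≫ g ≫ eY.hom, funext fun j => ?_⟩
    refine (?_ : (p j).mapDerivedCategory.map (eX.inv ≫ g ≫ eY.hom) = f j)
    rw [Functor.map_comp, Functor.map_comp, hg]
    exact key j (f j)

instance : (comparison p).Faithful where
  map_injective {X Y} f g h := by
    obtain ⟨K, ⟨eX⟩⟩ : ∃ K, Nonempty (Q.obj K ≅ X) := ⟨_, ⟨Q.objObjPreimageIso X⟩⟩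
    obtain ⟨L, ⟨eY⟩⟩ : ∃ L, Nonempty (Q.obj L ≅ Y) := ⟨_, ⟨Q.objObjPreimageIso Y⟩⟩
    have := Q_hom_eq_zero p (eX.hom ≫ (f - g) ≫ eY.inv) fun j => by
      have hj : (p j).mapDerivedCategory.map f = (p j).mapDerivedCategory.map g := congr_fun h j
      simp [Functor.map_sub, hj]
    rwa [Preadditive.IsIso.comp_left_eq_zero, Preadditive.IsIso.comp_right_eq_zero,
      sub_eq_zero] at this

instance : (comparison p).IsEquivalence where

end

section Sigma

variable (A : Type*) [Category* A] {Λ : Type*} (I : Λ → Type*) [∀ l, Category* (I l)]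

/-- Restriction of functors along the inclusion `I l ⥤ ∐ I l`. -/
abbrev restriction (l : Λ) : ((Σ l, I l) ⥤ A) ⥤ (I l ⥤ A) :=
  (Functor.whiskeringLeft _ _ A).obj (Sigma.incl l)

/-- The universal property of the coproduct of categories: `A^{∐ I l} ≃ ∏ A^{I l}`. -/
instance : (Functor.pi' (restriction A I)).IsEquivalence where
  faithful := ⟨fun {F G} f g h => by
    ext ⟨l, X⟩
    exact congr_app (congr_fun h l) X⟩
  full := ⟨fun {F G} f => ⟨Sigma.natTrans f, rfl⟩⟩
  essSurj := ⟨fun F => ⟨Sigma.desc F, ⟨Pi.isoMk fun l => Sigma.inclDesc F l⟩⟩⟩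

end Sigma

end DerivedCategoryPi

/-- Let `A` be a Grothendieck abelian category (abelian, cocomplete, AB5, with a separator)
with enough projective objects, and let `(I λ)` be a family of small categories. Then the
derived category of the functor category from the disjoint union `∐ I λ` (the sigma category)
to `A` is equivalent to the product of the derived categories of the functor categories
`I λ ⥤ A`. -/
theorem derivedCategory_sigma_equivalence_pi
    (A : Type u) [Category.{v} A] [Abelian A] [HasColimits A] [AB5 A]
    [HasSeparator A] [EnoughProjectives A]
    {Λ : Type w} (I : Λ → Type w) [∀ l, SmallCategory (I l)]
    [HasDerivedCategory.{max u v} ((Σ l, I l) ⥤ A)]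
    [∀ l, HasDerivedCategory.{max u v} (I l ⥤ A)] :
    Nonempty (DerivedCategory ((Σ l, I l) ⥤ A) ≌ (∀ l, DerivedCategory (I l ⥤ A))) := by
  exact ⟨(DerivedCategoryPi.comparison
    (DerivedCategoryPi.restriction A I)).asEquivalence⟩
end

section
/- Let u : I ⥤ J be a functor between small categories, let j be an object of J and i an object of I. Let I/j denote the slice category whose objects are pairs (i′, β : u(i′) ⟶ j) and whose morphisms (i′, β) → (i″, β″) are morphisms i′ → i″ in I compatible with the structure maps to j, and let π_j : I/j ⥤ I be the forgetful functor. Let i\(I/j) be the coslice (structured arrow) category of π_j under i, whose objects are pairs consisting of an object x of I/j together with a morphism i ⟶ π_j(x) in I. Then the functor σ from the discrete category on the set Hom_J(u(i), j) to i\(I/j), sending β : u(i) ⟶ j to the object ((i, β), id_i), admits a right adjoint σ′ with σ′ ∘ σ = id; in particular σ is an initial (cofinal for limits) functor, i.e. limits over i\(I/j) may be computed after restriction along σ. -/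
/-!
The right adjoint `σ'` sends an object `((i', β'), f : i ⟶ i')` to the composite
`u(f) ≫ β' : u(i) ⟶ j`; compatibility of morphisms with the structure maps makes this composite
constant along morphisms, so it is a functor to the discrete category. The unit is the identity,
and the counit at `((i', β'), f)` is given by `f` itself, viewed as a morphism
`(i, u(f) ≫ β') ⟶ (i', β')` of `I/j` under `i`. A morphism out of `σ(β)` is determined by its
target, since its underlying morphism in `I` must be the structure map `f`; this gives naturality
of the counit. Left adjoints are initial.
-/

open CategoryTheory

/-- The functor `σ` from the discrete category on `Hom_J(u(i), j)` to the coslice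
category `i\(I/j) = StructuredArrow i (CostructuredArrow.proj u j)`, sending
`β : u(i) ⟶ j` to the object `((i, β), 𝟙 i)`. -/
def sliceCosliceincl {I J : Type*} [SmallCategory I] [SmallCategory J]
    (u : I ⥤ J) (j : J) (i : I) :
    Discrete (u.obj i ⟶ j) ⥤ StructuredArrow i (CostructuredArrow.proj u j) :=
  Discrete.functor fun β =>
    StructuredArrow.mk (T := CostructuredArrow.proj u j) (Y := CostructuredArrow.mk β) (𝟙 i)

/-- The right adjoint `σ'` of `σ`, sending `((i', β'), f : i ⟶ i')` to `u(f) ≫ β'`. -/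
def sliceCosliceRightAdjoint {I J : Type*} [SmallCategory I] [SmallCategory J]
    (u : I ⥤ J) (j : J) (i : I) :
    StructuredArrow i (CostructuredArrow.proj u j) ⥤ Discrete (u.obj i ⟶ j) where
  obj x := ⟨u.map x.hom ≫ x.right.hom⟩
  map {x y} g := Discrete.eqToHom (by
    have h₁ : x.hom ≫ g.right.left = y.hom := StructuredArrow.w g
    have h₂ : u.map g.right.left ≫ y.right.hom = x.right.hom := CostructuredArrow.w g.right
    change u.map x.hom ≫ x.right.hom = u.map y.hom ≫ y.right.hom
    have h₃ : u.map y.hom = u.map x.hom ≫ u.map g.right.left :=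
      (congrArg u.map h₁).symm.trans (u.map_comp _ _)
    exact (congrArg (u.map x.hom ≫ ·) h₂).symm.trans
      ((Category.assoc _ _ _).symm.trans (congrArg (· ≫ y.right.hom) h₃).symm))

theorem sliceCosliceincl_comp_rightAdjoint {I J : Type*} [SmallCategory I] [SmallCategory J]
    (u : I ⥤ J) (j : J) (i : I) :
    sliceCosliceincl u j i ⋙ sliceCosliceRightAdjoint u j i = 𝟭 (Discrete (u.obj i ⟶ j)) := by
  refine CategoryTheory.Functor.ext (fun β => ?_) (fun _ _ _ => Subsingleton.elim _ _)
  refine Discrete.ext ?_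
  change u.map (𝟙 i) ≫ β.as = β.as
  rw [u.map_id, Category.id_comp]

/-- A morphism out of `σ(β)` is unique if it exists: its underlying morphism in `I` is the
structure map of the target. -/
theorem sliceCosliceincl_hom_ext {I J : Type*} [SmallCategory I] [SmallCategory J]
    (u : I ⥤ J) (j : J) (i : I) (β : Discrete (u.obj i ⟶ j))
    (x : StructuredArrow i (CostructuredArrow.proj u j))
    (g h : (sliceCosliceincl u j i).obj β ⟶ x) : g = h := by
  have key : ∀ k : (sliceCosliceincl u j i).obj β ⟶ x, k.right.left = x.hom := fun k =>
    (Category.id_comp _).symm.trans (StructuredArrow.w k)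
  exact StructuredArrow.hom_ext _ _ (CostructuredArrow.hom_ext _ _ ((key g).trans (key h).symm))

/-- The adjunction `σ ⊣ σ'`; its counit at `((i', β'), f)` is `f`. -/
def sliceCosliceAdjunction {I J : Type*} [SmallCategory I] [SmallCategory J]
    (u : I ⥤ J) (j : J) (i : I) :
    sliceCosliceincl u j i ⊣ sliceCosliceRightAdjoint u j i :=
  Adjunction.mkOfUnitCounit
    { unit := eqToHom (sliceCosliceincl_comp_rightAdjoint u j i).symm
      counit :=
        { app := fun x => StructuredArrow.homMk (CostructuredArrow.homMk x.hom rfl)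
            (Category.id_comp _)
          naturality := fun _ _ _ => sliceCosliceincl_hom_ext u j i _ _ _ _ }
      left_triangle := NatTrans.ext (funext fun _ => sliceCosliceincl_hom_ext u j i _ _ _ _)
      right_triangle := NatTrans.ext (funext fun _ => Subsingleton.elim _ _) }

/-- The functor `σ` from the discrete category on `Hom_J(u(i), j)` to the coslice
category `i\(I/j)` admits a right adjoint `σ′` with `σ′ ∘ σ = id`; in particular
`σ` is an initial functor. -/
theorem sliceCosliceincl_has_right_adjoint_and_initial
    {I J : Type*} [SmallCategory I] [SmallCategory J] (u : I ⥤ J) (j : J) (i : I) :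
    ∃ σ' : StructuredArrow i (CostructuredArrow.proj u j) ⥤ Discrete (u.obj i ⟶ j),
      Nonempty (sliceCosliceincl u j i ⊣ σ') ∧
      sliceCosliceincl u j i ⋙ σ' = 𝟭 (Discrete (u.obj i ⟶ j)) ∧
      (sliceCosliceincl u j i).Initial := by
  exact ⟨sliceCosliceRightAdjoint u j i, ⟨sliceCosliceAdjunction u j i⟩,
    sliceCosliceincl_comp_rightAdjoint u j i,
    Functor.initial_of_adjunction (sliceCosliceAdjunction u j i)⟩
end

section
/- Let A be an additive category. Let F, G, F′, G′ be cochain complexes in A indexed by ℤ, let φ : F → G, φ′ : F′ → G′, γ₁ : F → F′ and γ₂ : G → G′ be chain maps, and suppose s is a homotopy between the chain maps γ₂ ∘ φ and φ′ ∘ γ₁. Then there exist a cochain complex C and chain maps ι : F → C, α : G → C and γ̃ : C → G′ such that: (i) α is a homotopy equivalence; (ii) ι is homotopic to α ∘ φ; (iii) γ̃ ∘ ι = φ′ ∘ γ₁, an equality of chain maps; and (iv) γ̃ ∘ α = γ₂, an equality of chain maps. (One may take C to be the mapping cylinder of φ, with Cⁿ = Fⁿ⁺¹ ⊕ Fⁿ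 ⊕ Gⁿ.) -/
open CategoryTheory Limits

universe v u

/-!
Let `K` be the mapping cone of `𝟙 F`. It is contractible, and by its universal property a
null-homotopy of a map `F ⟶ G'` is the same thing as an extension of that map along the
inclusion `F ⟶ K`. Up to isomorphism, the mapping cylinder of `φ` is `G ⊞ K`, with `α` the
inclusion of `G` and `ι = (φ, inr)`. As `K` is contractible, `α` is a homotopy equivalence and
`ι` is homotopic to `φ ≫ α`. The homotopy `s` makes `γ₁ ≫ φ' - φ ≫ γ₂` null-homotopic, hence
extends it to `k : K ⟶ G'`, and `γ` is `(γ₂, k)`: on `F` the two copies of `φ ≫ γ₂` cancel.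
-/

/-- Homotopy rectification of squares: let `A` be an additive category, let
`φ : F ⟶ G`, `φ' : F' ⟶ G'`, `γ₁ : F ⟶ F'`, `γ₂ : G ⟶ G'` be maps of cochain complexes
over `A` and let `s` be a homotopy between `γ₂ ∘ φ` and `φ' ∘ γ₁`. Then there are a
cochain complex `C` (one may take the mapping cylinder of `φ`) and chain maps
`ι : F ⟶ C`, `α : G ⟶ C`, `γ̃ : C ⟶ G'` such that `α` is a homotopy equivalence,
`ι` is homotopic to `α ∘ φ`, and the square with sides `ι, γ₁, γ̃, φ'` strictly
commutes, with `γ̃ ∘ α = γ₂`. -/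
theorem exists_cylinder_rectification
    {A : Type u} [Category.{v} A] [Preadditive A] [HasFiniteBiproducts A]
    {F G F' G' : CochainComplex A ℤ}
    (φ : F ⟶ G) (φ' : F' ⟶ G') (γ₁ : F ⟶ F') (γ₂ : G ⟶ G')
    (s : Homotopy (φ ≫ γ₂) (γ₁ ≫ φ')) :
    ∃ (C : CochainComplex A ℤ) (ι : F ⟶ C) (α : G ⟶ C) (γ : C ⟶ G'),
      (∃ β : C ⟶ G, Nonempty (Homotopy (α ≫ β) (𝟙 G)) ∧ Nonempty (Homotopy (β ≫ α) (𝟙 C))) ∧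
      Nonempty (Homotopy ι (φ ≫ α)) ∧
      ι ≫ γ = γ₁ ≫ φ' ∧
      α ≫ γ = γ₂ := by
  have : HasBinaryBiproducts A := hasBinaryBiproducts_of_finite_biproducts A
  let K := CochainComplex.mappingCone (𝟙 F)
  let r : F ⟶ K := CochainComplex.mappingCone.inr (𝟙 F)
  have hK : Homotopy (𝟙 K) 0 := CochainComplex.mappingCone.homotopyToZeroOfId F
  have hs : Homotopy (𝟙 F ≫ (γ₁ ≫ φ' - φ ≫ γ₂)) 0 :=
    (Homotopy.ofEq (Category.id_comp _)).trans s.symm.equivSubZero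
  let k : K ⟶ G' := HomologicalComplex.homotopyCofiber.desc (𝟙 F) _ hs
  have hk : r ≫ k = γ₁ ≫ φ' - φ ≫ γ₂ := HomologicalComplex.homotopyCofiber.inr_desc _ _ _
  -- A map factoring through the contractible complex `K` is null-homotopic.
  have null {X Y : CochainComplex A ℤ} (f : X ⟶ K) (g : K ⟶ Y) : Homotopy (f ≫ g) 0 :=
    (Homotopy.ofEq (by simp)).trans
      (((hK.compLeft f).compRight g).trans (Homotopy.ofEq (by simp)))
  refine ⟨G ⊞ K, biprod.lift φ r, biprod.inl, biprod.desc γ₂ k,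
    ⟨biprod.fst, ⟨Homotopy.ofEq (by simp)⟩, ⟨?_⟩⟩, ⟨?_⟩, ?_, by simp⟩
  · refine (Homotopy.equivSubZero.symm
      ((Homotopy.ofEq ?_).trans (null biprod.snd biprod.inr))).symm
    rw [← biprod.total]
    abel
  · refine Homotopy.equivSubZero.symm ((Homotopy.ofEq ?_).trans (null r biprod.inr))
    rw [biprod.lift_eq]
    abel
  · rw [biprod.lift_desc, hk]
    abel
end

section
/- Let G be a group, H a normal subgroup of G with inclusion ι : H → G and quotient map m : G → G/H, and let Bι : BH ⥤ BG and Bm : BG ⥤ B(G/H) be the induced functors of one-object categories. Let BG/⋆ denote the slice category of BG over the unique object ⋆ of B(G/H) relative to Bm (the costructured arrow category CostructuredArrow Bm ⋆, whose objects are the elements g ∈ G and whose morphisms g → g′ are the h ∈ H with h·g′ = g), with forgetful functor π : BG/⋆ ⥤ BG; and let ⋆\BG denote the corresponding coslice category (StructuredArrow ⋆ Bm), with forgetful functor ϖ : ⋆\BG ⥤ BG. Then there are equivalences of categories λ : BH ≃ BG/⋆ and μ : BH ≃ ⋆\BG, sending the unique object of BH to the neutral element 1 ∈ G, such that π ∘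 λ = Bι and ϖ ∘ μ = Bι. -/
/-!
In the slice as well as in the coslice of `Bm`, the endomorphisms of the identity arrow are the
elements `h : G` satisfying `m h = 1`, where `m : G → G/H` is the quotient map: they form `H`.
So `BH` embeds fully faithfully onto the identity arrow, compatibly with the forgetful functors.
Since `m` is surjective and every morphism of `BG` is invertible, each object of the slice or
coslice is isomorphic to the identity arrow, via a lift to `G` of its structure map
(or of the inverse of that map).
-/

open CategoryTheory

universe u

namespace SliceCoslice

variable {G : Type u} [Group G] (H : Subgroup G) [H.Normal]

/-- The functor `BH ⥤ BG/⋆` sending `⋆` to the identity arrow and `h` to its image in `G`. -/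
def toSlice : SingleObj ↥H ⥤
    CostructuredArrow ((QuotientGroup.mk' H).toFunctor) (SingleObj.star (G ⧸ H)) where
  obj _ := CostructuredArrow.mk (Y := SingleObj.star G) (𝟙 (SingleObj.star (G ⧸ H)))
  map h := CostructuredArrow.homMk ((H.subtype).toFunctor.map h) (by
    have hh : ((h.1 : G) : G ⧸ H) = 1 := (QuotientGroup.eq_one_iff _).2 h.2
    exact (one_mul _).trans hh)
  map_id _ := by ext; rfl
  map_comp _ _ := by ext; rfl

/-- The functor `BH ⥤ ⋆\BG` sending `⋆` to the identity arrow and `h` to its image in `G`. -/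
def toCoslice : SingleObj ↥H ⥤
    StructuredArrow (SingleObj.star (G ⧸ H)) ((QuotientGroup.mk' H).toFunctor) where
  obj _ := StructuredArrow.mk (Y := SingleObj.star G) (𝟙 (SingleObj.star (G ⧸ H)))
  map h := StructuredArrow.homMk ((H.subtype).toFunctor.map h) (by
    have hh : ((h.1 : G) : G ⧸ H) = 1 := (QuotientGroup.eq_one_iff _).2 h.2
    exact (mul_one _).trans hh)
  map_id _ := by ext; rfl
  map_comp _ _ := by ext; rfl

instance : (toSlice H).Faithful where
  map_injective h := Subtype.ext (congrArg CommaMorphism.left h)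

instance : (toCoslice H).Faithful where
  map_injective h := Subtype.ext (congrArg CommaMorphism.right h)

instance : (toSlice H).Full where
  map_surjective f := by
    have hw : (1 : G ⧸ H) * ((show G from f.left : G) : G ⧸ H) = 1 := CostructuredArrow.w f
    rw [one_mul] at hw
    exact ⟨⟨f.left, (QuotientGroup.eq_one_iff _).1 hw⟩, by ext; rfl⟩

instance : (toCoslice H).Full where
  map_surjective f := by
    have hw : ((show G from f.right : G) : G ⧸ H) * (1 : G ⧸ H) = 1 := StructuredArrow.w f
    rw [mul_one] at hw
    exact ⟨⟨f.right, (QuotientGroup.eq_one_iff _).1 hw⟩, by ext; rfl⟩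

instance : (toSlice H).EssSurj where
  mem_essImage X := by
    obtain ⟨g, hg⟩ := QuotientGroup.mk'_surjective H X.hom
    let f : SingleObj.star G ⟶ X.left := (g⁻¹ : G)
    refine ⟨SingleObj.star H, ⟨CostructuredArrow.isoMk (asIso f) ?_⟩⟩
    change (show G ⧸ H from X.hom) * QuotientGroup.mk' H g⁻¹ = 1
    rw [map_inv, hg]
    exact mul_inv_cancel _

instance : (toCoslice H).EssSurj where
  mem_essImage X := by
    obtain ⟨g, hg⟩ := QuotientGroup.mk'_surjective H X.hom
    let f : SingleObj.star G ⟶ X.right := (g : G)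
    refine ⟨SingleObj.star H, ⟨StructuredArrow.isoMk (asIso f) ?_⟩⟩
    change QuotientGroup.mk' H g * (1 : G ⧸ H) = X.hom
    rw [mul_one, hg]

instance : (toSlice H).IsEquivalence where

instance : (toCoslice H).IsEquivalence where

end SliceCoslice

/-- Let `H` be a normal subgroup of a group `G`, with inclusion `ι : H → G` and quotient
map `m : G → G/H`, inducing functors `Bι : BH ⥤ BG` and `Bm : BG ⥤ B(G/H)` of one-object
categories. Then there are equivalences `λ : BH ≌ BG/⋆` (with the slice category
`BG/⋆ = CostructuredArrow Bm ⋆`) and `μ : BH ≌ ⋆\BG` (with the coslice category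
`⋆\BG = StructuredArrow ⋆ Bm`), sending the unique object of `BH` to the object given
by the neutral element (the identity arrow), such that `π ∘ λ = Bι` and `ϖ ∘ μ = Bι`,
where `π`, `ϖ` are the forgetful functors. -/
theorem singleObj_slice_coslice_equivalences
    {G : Type u} [Group G] (H : Subgroup G) [H.Normal] :
    (∃ lam : SingleObj ↥H ≌
        CostructuredArrow ((QuotientGroup.mk' H).toFunctor) (SingleObj.star (G ⧸ H)),
      lam.functor.obj (SingleObj.star ↥H) =
        CostructuredArrow.mk (Y := SingleObj.star G) (𝟙 (SingleObj.star (G ⧸ H))) ∧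
      lam.functor ⋙ CostructuredArrow.proj _ _ = (H.subtype).toFunctor) ∧
    (∃ mu : SingleObj ↥H ≌
        StructuredArrow (SingleObj.star (G ⧸ H)) ((QuotientGroup.mk' H).toFunctor),
      mu.functor.obj (SingleObj.star ↥H) =
        StructuredArrow.mk (Y := SingleObj.star G) (𝟙 (SingleObj.star (G ⧸ H))) ∧
      mu.functor ⋙ StructuredArrow.proj _ _ = (H.subtype).toFunctor) := by
  exact ⟨⟨(SliceCoslice.toSlice H).asEquivalence, rfl, rfl⟩,
    ⟨(SliceCoslice.toCoslice H).asEquivalence, rfl, rfl⟩⟩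
end
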